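/- arXiv:2604.10757 — 4 statements merged into one kernel-verified Lean document; each statement's English description precedes it below -/
import Mathlib

section
/- Let E and F be finite-dimensional real inner product spaces. On the set Σ := {T : E →L[ℝ] F | T is surjective}, the map T ↦ T.adjoint ∘L Ring.inverse (T ∘L T.adjoint), sending each surjective continuous linear map to its Moore–Penrose pseudoinverse T* ∘ (T ∘ T*)⁻¹, is infinitely differentiable (C^∞, i.e., ContDiffOn ℝ ⊤ on Σ). -/
/-!
If `T` is surjective, the open mapping theorem gives preimages of controlled norm, so `T†` is
bounded below. As `⟪T T† y, y⟫ = ‖T† y‖ ^ 2`, the operator `T T†` is then coercive, hence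
invertible. The pseudoinverse is thus obtained from the linear map `T ↦ T†` by composing operators
and inverting units of a Banach algebra, both of which are smooth operations.
-/

section Adjoint

open ContinuousLinearMap

variable {𝕜 E F : Type*} [RCLike 𝕜]
  [NormedAddCommGroup E] [InnerProductSpace 𝕜 E] [CompleteSpace E]
  [NormedAddCommGroup F] [InnerProductSpace 𝕜 F] [CompleteSpace F]

theorem exists_norm_le_mul_norm_adjoint_of_surjective {T : E →L[𝕜] F}
    (hT : Function.Surjective T) : ∃ C > 0, ∀ y, ‖y‖ ≤ C * ‖adjoint T y‖ := by
  obtain ⟨C, C_pos, hC⟩ := T.exists_preimage_norm_le hT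
  refine ⟨C, C_pos, fun y => ?_⟩
  obtain ⟨x, rfl, hx⟩ := hC y
  rcases (norm_nonneg (T x)).eq_or_lt with h_zero | h_pos
  · rw [← h_zero]
    positivity
  · refine le_of_mul_le_mul_left ?_ h_pos
    calc ‖T x‖ * ‖T x‖ = ‖inner 𝕜 x (adjoint T (T x))‖ := by
          rw [adjoint_inner_right, ← inner_self_re_eq_norm, inner_self_eq_norm_sq, sq]
      _ ≤ ‖x‖ * ‖adjoint T (T x)‖ := norm_inner_le_norm _ _
      _ ≤ C * ‖T x‖ * ‖adjoint T (T x)‖ := by gcongr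
      _ = ‖T x‖ * (C * ‖adjoint T (T x)‖) := by ring

theorem norm_inner_self_comp_adjoint_apply (T : E →L[𝕜] F) (y : F) :
    ‖inner 𝕜 ((T ∘L adjoint T) y) y‖ = ‖adjoint T y‖ ^ 2 := by
  rw [comp_apply, ← adjoint_inner_right, ← inner_self_re_eq_norm, inner_self_eq_norm_sq]

theorem isUnit_self_comp_adjoint_of_surjective {T : E →L[𝕜] F} (hT : Function.Surjective T) :
    IsUnit (T ∘L adjoint T) := by
  obtain ⟨C, C_pos, hC⟩ := exists_norm_le_mul_norm_adjoint_of_surjective hT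
  refine isUnit_of_forall_le_norm_inner_map _ (c := ⟨(C ^ 2)⁻¹, by positivity⟩)
    (by positivity : 0 < (C ^ 2)⁻¹) fun y => ?_
  calc ‖y‖ ^ 2 * (C ^ 2)⁻¹ ≤ (C * ‖adjoint T y‖) ^ 2 * (C ^ 2)⁻¹ := by gcongr; exact hC y
    _ = ‖adjoint T y‖ ^ 2 := by field_simp
    _ = ‖inner 𝕜 ((T ∘L adjoint T) y) y‖ := (norm_inner_self_comp_adjoint_apply T y).symm

end Adjoint

section Smoothness

theorem contDiffOn_ringInverse_comp {𝕜 X R : Type*} [NontriviallyNormedField 𝕜]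
    [NormedAddCommGroup X] [NormedSpace 𝕜 X] [NormedRing R] [NormedAlgebra 𝕜 R]
    [HasSummableGeomSeries R] {n : WithTop ℕ∞} {f : X → R} {s : Set X}
    (hf : ContDiffOn 𝕜 n f s) (h_unit : ∀ x ∈ s, IsUnit (f x)) :
    ContDiffOn 𝕜 n (fun x => Ring.inverse (f x)) s := by
  intro x hx
  obtain ⟨u, hu⟩ := h_unit x hx
  have h_inverse : ContDiffAt 𝕜 n Ring.inverse (f x) := hu ▸ contDiffAt_ringInverse 𝕜 u
  exact h_inverse.comp_contDiffWithinAt x (hf x hx)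

variable {E F : Type*}
  [NormedAddCommGroup E] [InnerProductSpace ℝ E] [CompleteSpace E]
  [NormedAddCommGroup F] [InnerProductSpace ℝ F] [CompleteSpace F] {n : WithTop ℕ∞}

theorem contDiff_adjoint :
    ContDiff ℝ n (fun T : E →L[ℝ] F => ContinuousLinearMap.adjoint T) := by
  have h_linear : IsLinearMap ℝ (fun T : E →L[ℝ] F => ContinuousLinearMap.adjoint T) :=
    ⟨map_add _, map_smulₛₗ _⟩
  refine (h_linear.with_bound 1 fun T => ?_).contDiff
  rw [LinearIsometryEquiv.norm_map, one_mul]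

theorem stmt3_general :
    ContDiffOn ℝ n
      (fun T : E →L[ℝ] F =>
        ContinuousLinearMap.adjoint T ∘L Ring.inverse (T ∘L ContinuousLinearMap.adjoint T))
      {T : E →L[ℝ] F | Function.Surjective T} := by
  have h_comp : ContDiff ℝ n (fun T : E →L[ℝ] F => T ∘L ContinuousLinearMap.adjoint T) :=
    contDiff_id.clm_comp contDiff_adjoint
  exact contDiff_adjoint.contDiffOn.clm_comp <|
    contDiffOn_ringInverse_comp h_comp.contDiffOn fun _ hT =>
      isUnit_self_comp_adjoint_of_surjective hT

end Smoothness

/-- On the set of surjective continuous linear maps `T : E →L[ℝ] F` between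
finite-dimensional real inner product spaces, the Moore–Penrose pseudoinverse map
`T ↦ T.adjoint ∘L (T ∘L T.adjoint)⁻¹` is `C^∞`. -/
theorem stmt3
    {E F : Type*} [NormedAddCommGroup E] [InnerProductSpace ℝ E] [FiniteDimensional ℝ E]
    [NormedAddCommGroup F] [InnerProductSpace ℝ F] [FiniteDimensional ℝ F] :
    ContDiffOn ℝ (⊤ : ℕ∞)
      (fun T : E →L[ℝ] F =>
        ContinuousLinearMap.adjoint T ∘L Ring.inverse (T ∘L ContinuousLinearMap.adjoint T))
      {T : E →L[ℝ] F | Function.Surjective T} := by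
  have := FiniteDimensional.complete ℝ E
  have := FiniteDimensional.complete ℝ F
  exact stmt3_general
end

section
/- Let E be a finite-dimensional real inner product space, let X : E → E be differentiable, let ε > 0, and let q : ℝ → E be twice differentiable and satisfy the closed-loop Koditschek equation q''(t) = (fderiv ℝ X (q t)) (q'(t)) − ε⁻¹ • (q'(t) − X (q t)) for all t ∈ ℝ. Then the velocity error y(t) := q'(t) − X(q(t)) satisfies y(t) = exp(−t/ε) • y(0) for all t ∈ ℝ. In particular, ‖q'(t) − X(q(t))‖ = exp(−t/ε) · ‖q'(0) − X(q(0))‖ for all t. -/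
section VelocityError

variable {E : Type*} [NormedAddCommGroup E] [NormedSpace ℝ E]

theorem eq_exp_smul_of_hasDerivAt_smul {y : ℝ → E} {c : ℝ}
    (hy : ∀ t, HasDerivAt y (c • y t) t) (t₀ t : ℝ) :
    y t = Real.exp (c * (t - t₀)) • y t₀ := by
  have hderiv : ∀ s, HasDerivAt (fun s ↦ Real.exp (c * (t - s)) • y s) 0 s := by
    intro s
    have hexp : HasDerivAt (fun s ↦ Real.exp (c * (t - s)))
        (Real.exp (c * (t - s)) * (c * -1)) s :=
      (((hasDerivAt_id s).const_sub t).const_mul c).exp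
    refine (hexp.smul (hy s)).congr_deriv ?_
    module
  have hconst : Real.exp (c * (t - t)) • y t = Real.exp (c * (t - t₀)) • y t₀ :=
    is_const_of_deriv_eq_zero (fun s ↦ (hderiv s).differentiableAt) (fun s ↦ (hderiv s).deriv) t t₀
  simpa only [sub_self, mul_zero, Real.exp_zero, one_smul] using hconst

/-- The error `y = q' - X ∘ q` between the velocity of the curve `q` and the reference vector
field `X` that `q` should follow. -/
noncomputable def velocityError (X : E → E) (q : ℝ → E) (t : ℝ) : E :=
  deriv q t - X (q t)

theorem hasDerivAt_velocityError {X : E → E} {q : ℝ → E} {t : ℝ}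
    (hX : DifferentiableAt ℝ X (q t)) (hq : DifferentiableAt ℝ q t)
    (hq' : DifferentiableAt ℝ (deriv q) t) :
    HasDerivAt (velocityError X q) (deriv (deriv q) t - fderiv ℝ X (q t) (deriv q t)) t :=
  hq'.hasDerivAt.sub (hX.hasFDerivAt.comp_hasDerivAt t hq.hasDerivAt)

-- The gain `k` is the paper's `1 / ε`.
theorem stmt7_general {X : E → E} {q : ℝ → E} {k : ℝ}
    (hX : ∀ t, DifferentiableAt ℝ X (q t)) (hq : Differentiable ℝ q)
    (hq' : Differentiable ℝ (deriv q))
    (heq : ∀ t, deriv (deriv q) t = fderiv ℝ X (q t) (deriv q t) - k • velocityError X q t)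
    (t₀ t : ℝ) :
    velocityError X q t = Real.exp (-k * (t - t₀)) • velocityError X q t₀ ∧
      ‖velocityError X q t‖ = Real.exp (-k * (t - t₀)) * ‖velocityError X q t₀‖ := by
  have hderiv : ∀ s, HasDerivAt (velocityError X q) (-k • velocityError X q s) s := by
    intro s
    refine (hasDerivAt_velocityError (hX s) (hq s) (hq' s)).congr_deriv ?_
    rw [heq s, sub_sub_cancel_left, neg_smul]
  have hdecay := eq_exp_smul_of_hasDerivAt_smul hderiv t₀ t
  exact ⟨hdecay, by rw [hdecay, norm_smul, Real.norm_eq_abs, Real.abs_exp]⟩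

end VelocityError

/-- For the Euclidean closed-loop Koditschek equation
`q'' = (DX)(q) q' − ε⁻¹ (q' − X(q))`, the velocity error `y(t) = q'(t) − X(q(t))` satisfies
`y(t) = exp(−t/ε) y(0)`; in particular its norm decays exactly exponentially. -/
theorem stmt7
    {E : Type*} [NormedAddCommGroup E] [InnerProductSpace ℝ E] [FiniteDimensional ℝ E]
    (X : E → E) (hX : Differentiable ℝ X) (ε : ℝ) (hε : 0 < ε)
    (q : ℝ → E) (hq : Differentiable ℝ q) (hq' : Differentiable ℝ (deriv q))
    (heq : ∀ t : ℝ, deriv (deriv q) t =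
      (fderiv ℝ X (q t)) (deriv q t) - ε⁻¹ • (deriv q t - X (q t))) :
    ∀ t : ℝ,
      deriv q t - X (q t) = Real.exp (-t / ε) • (deriv q 0 - X (q 0)) ∧
      ‖deriv q t - X (q t)‖ = Real.exp (-t / ε) * ‖deriv q 0 - X (q 0)‖ := by
  intro t
  simpa only [velocityError, sub_zero, neg_mul, mul_neg, div_eq_inv_mul] using
    stmt7_general (fun s ↦ hX (q s)) hq hq' heq 0 t
end

section
/- Let E be a finite-dimensional real inner product space, let X : E → E be differentiable, let ε > 0, and let q : ℝ → E be twice differentiable and satisfy q''(t) = (fderiv ℝ X (q t)) (q'(t)) − ε⁻¹ • (q'(t) − X (q t)) for all t ∈ ℝ. If q'(0) = X(q(0)), then q'(t) = X(q(t)) for all t ∈ ℝ; that is, q is a trajectory of the first-order reference dynamics q̇ = X(q), so the graph of X is an invariant set for the closed-loop second-order system. -/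
/-!
The velocity error `e = q' - X ∘ q` satisfies the linear equation `e' = -ε⁻¹ • e`: by the chain
rule, the feedforward term of the closed-loop equation cancels the derivative of `X ∘ q`. Hence `e`
decays exponentially, `e t = exp (-ε⁻¹ * t) • e 0`, and vanishes identically if `e 0 = 0`. Working
with `e` avoids uniqueness for the closed-loop equation itself, which can fail since `X` is only
differentiable.
-/

section

variable {E : Type*} [NormedAddCommGroup E] [NormedSpace ℝ E]

theorem hasDerivAt_exp_mul_sub_smul (c t₀ t : ℝ) (x : E) :
    HasDerivAt (fun s ↦ Real.exp (c * (s - t₀)) • x) (c • Real.exp (c * (t - t₀)) • x) t := by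
  have hexp : HasDerivAt (fun s ↦ Real.exp (c * (s - t₀))) (Real.exp (c * (t - t₀)) * c) t := by
    simpa using (((hasDerivAt_id t).sub_const t₀).const_mul c).exp
  exact (hexp.smul_const x).congr_deriv (by module)

theorem eq_exp_mul_sub_smul_of_hasDerivAt_smul {c : ℝ} {e : ℝ → E}
    (he : ∀ t, HasDerivAt e (c • e t) t) (t₀ t : ℝ) :
    e t = Real.exp (c * (t - t₀)) • e t₀ := by
  have hunique : e = fun s ↦ Real.exp (c * (s - t₀)) • e t₀ :=
    ODE_solution_unique_univ (v := fun _ x ↦ c • x) (s := fun _ ↦ Set.univ)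
      (fun _ ↦ (lipschitzWith_smul c).lipschitzOnWith)
      (fun s ↦ ⟨he s, Set.mem_univ _⟩)
      (fun s ↦ ⟨hasDerivAt_exp_mul_sub_smul c t₀ s (e t₀), Set.mem_univ _⟩)
      (t₀ := t₀) (by simp)
  exact congrFun hunique t

theorem hasDerivAt_velocity_sub_comp {X : E → E} {X' : E →L[ℝ] E} {q v : ℝ → E} {k t : ℝ}
    (hX : HasFDerivAt X X' (q t)) (hq : HasDerivAt q (v t) t)
    (hv : HasDerivAt v (X' (v t) - k • (v t - X (q t))) t) :
    HasDerivAt (fun s ↦ v s - X (q s)) (-k • (v t - X (q t))) t :=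
  (hv.sub (hX.comp_hasDerivAt t hq)).congr_deriv (by module)

theorem stmt8_general {X : E → E} {X' : ℝ → E →L[ℝ] E} {q v : ℝ → E} {k : ℝ}
    (hX : ∀ t, HasFDerivAt X (X' t) (q t)) (hq : ∀ t, HasDerivAt q (v t) t)
    (hv : ∀ t, HasDerivAt v (X' t (v t) - k • (v t - X (q t))) t) (t₀ t : ℝ) :
    v t - X (q t) = Real.exp (-k * (t - t₀)) • (v t₀ - X (q t₀)) :=
  eq_exp_mul_sub_smul_of_hasDerivAt_smul
    (fun s ↦ hasDerivAt_velocity_sub_comp (hX s) (hq s) (hv s)) t₀ t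

end

/-- For the Euclidean closed-loop Koditschek equation, if the initial velocity lies
on the section, i.e. `q'(0) = X(q(0))`, then `q'(t) = X(q(t))` for all `t`: the graph of `X` is
invariant and `q` is a trajectory of the first-order reference dynamics. -/
theorem stmt8
    {E : Type*} [NormedAddCommGroup E] [InnerProductSpace ℝ E] [FiniteDimensional ℝ E]
    (X : E → E) (hX : Differentiable ℝ X) (ε : ℝ) (hε : 0 < ε)
    (q : ℝ → E) (hq : Differentiable ℝ q) (hq' : Differentiable ℝ (deriv q))
    (heq : ∀ t : ℝ, deriv (deriv q) t =
      (fderiv ℝ X (q t)) (deriv q t) - ε⁻¹ • (deriv q t - X (q t)))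
    (h0 : deriv q 0 = X (q 0)) :
    ∀ t : ℝ, deriv q t = X (q t) := by
  intro t
  have herror := stmt8_general (fun s ↦ (hX (q s)).hasFDerivAt) (fun s ↦ (hq s).hasDerivAt)
    (fun s ↦ heq s ▸ (hq' s).hasDerivAt) 0 t
  rwa [h0, sub_self, smul_zero, sub_eq_zero] at herror
end

section
/- Let E be a finite-dimensional real inner product space, let H : E → (E →L[ℝ] E) be a map, let ε > 0 and 0 < c ≤ C be constants with c · ‖v‖² ≤ ⟪v, H(x) v⟫ ≤ C · ‖v‖² for all x, v ∈ E. Let X : E → E be differentiable, and let q : ℝ → E be twice differentiable and satisfy q''(t) = (fderiv ℝ X (q t)) (q'(t)) − ε⁻¹ • H(q t) (q'(t) − X (q t)) for all t. Then the error y(t) := q'(t) − X(q(t)) satisfies, for all t ≥ 0, exp(−(2C/ε)·t) · ‖y(0)‖² ≤ ‖y(t)‖² ≤ exp(−(2c/ε)·t) · ‖y(0)‖². -/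
open RealInnerProductSpace

/-!
Along a solution, the chain rule gives `(X ∘ q)' = DX(q) q'`, so the feedforward term of the
equation cancels in the derivative of the error `y = q' - X ∘ q`, which leaves
`y' = -ε⁻¹ H(q) y`. Hence `(‖y‖²)' = -(2 / ε) ⟪y, H(q) y⟫` lies between `-(2 C / ε) ‖y‖²` and
`-(2 c / ε) ‖y‖²`, and Grönwall's inequality, applied to `‖y‖²` and to `-‖y‖²`, integrates these
bounds.
-/

open Set

section Gronwall

variable {f f' : ℝ → ℝ} {K a b : ℝ}

theorem le_exp_mul_of_deriv_right_le (hf : ContinuousOn f (Icc a b))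
    (hf' : ∀ t ∈ Ico a b, HasDerivWithinAt f (f' t) (Ici t) t)
    (hle : ∀ t ∈ Ico a b, f' t ≤ K * f t) :
    ∀ t ∈ Icc a b, f t ≤ Real.exp (K * (t - a)) * f a := by
  intro t ht
  have hbound : f t ≤ gronwallBound (f a) K 0 (t - a) :=
    le_gronwallBound_of_liminf_deriv_right_le hf
      (fun s hs _ hr => (hf' s hs).liminf_right_slope_le hr) le_rfl
      (fun s hs => by simpa only [add_zero] using hle s hs) t ht
  rwa [gronwallBound_ε0, mul_comm] at hbound

theorem exp_mul_le_of_le_deriv_right (hf : ContinuousOn f (Icc a b))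
    (hf' : ∀ t ∈ Ico a b, HasDerivWithinAt f (f' t) (Ici t) t)
    (hle : ∀ t ∈ Ico a b, K * f t ≤ f' t) :
    ∀ t ∈ Icc a b, Real.exp (K * (t - a)) * f a ≤ f t := by
  intro t ht
  have hneg : -f t ≤ Real.exp (K * (t - a)) * -f a :=
    le_exp_mul_of_deriv_right_le (f := fun s => -f s) hf.neg (fun s hs => (hf' s hs).neg)
      (fun s hs => by simpa only [mul_neg] using neg_le_neg (hle s hs)) t ht
  rwa [mul_neg, neg_le_neg_iff] at hneg

end Gronwall

section NormSq

variable {E : Type*} [NormedAddCommGroup E] [InnerProductSpace ℝ E]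
  {y y' : ℝ → E} {k a b : ℝ}

theorem norm_sq_le_exp_mul_of_inner_deriv_right_le (hy : ContinuousOn y (Icc a b))
    (hy' : ∀ t ∈ Ico a b, HasDerivWithinAt y (y' t) (Ici t) t)
    (hle : ∀ t ∈ Ico a b, ⟪y t, y' t⟫ ≤ k * ‖y t‖ ^ 2) :
    ∀ t ∈ Icc a b, ‖y t‖ ^ 2 ≤ Real.exp (2 * k * (t - a)) * ‖y a‖ ^ 2 :=
  le_exp_mul_of_deriv_right_le (f := fun s => ‖y s‖ ^ 2) (hy.norm.pow 2)
    (fun t ht => (hy' t ht).norm_sq) (fun t ht => by linarith [hle t ht])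

theorem exp_mul_le_norm_sq_of_le_inner_deriv_right (hy : ContinuousOn y (Icc a b))
    (hy' : ∀ t ∈ Ico a b, HasDerivWithinAt y (y' t) (Ici t) t)
    (hle : ∀ t ∈ Ico a b, k * ‖y t‖ ^ 2 ≤ ⟪y t, y' t⟫) :
    ∀ t ∈ Icc a b, Real.exp (2 * k * (t - a)) * ‖y a‖ ^ 2 ≤ ‖y t‖ ^ 2 :=
  exp_mul_le_of_le_deriv_right (f := fun s => ‖y s‖ ^ 2) (hy.norm.pow 2)
    (fun t ht => (hy' t ht).norm_sq) (fun t ht => by linarith [hle t ht])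

end NormSq

theorem hasDerivWithinAt_sub_comp_of_feedforward {𝕜 E F : Type*} [NontriviallyNormedField 𝕜]
    [NormedAddCommGroup E] [NormedSpace 𝕜 E] [NormedAddCommGroup F] [NormedSpace 𝕜 F]
    {X : E → F} {X' : E →L[𝕜] F} {q : 𝕜 → E} {q' : E} {v : 𝕜 → F} {u : F} {s : Set 𝕜} {t : 𝕜}
    (hX : HasFDerivAt X X' (q t)) (hq : HasDerivWithinAt q q' s t)
    (hv : HasDerivWithinAt v (X' q' - u) s t) :
    HasDerivWithinAt (fun τ => v τ - X (q τ)) (-u) s t := by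
  simpa only [sub_sub_cancel_left, Function.comp_apply] using
    hv.fun_sub (hX.comp_hasDerivWithinAt t hq)

theorem stmt9_general {E : Type*} [NormedAddCommGroup E] [InnerProductSpace ℝ E]
    {H : E → E → E} {X : E → E} {q v : ℝ → E} {ε c C a b : ℝ} (hε : 0 < ε)
    (hH : ∀ t ∈ Icc a b, ∀ w, c * ‖w‖ ^ 2 ≤ ⟪w, H (q t) w⟫ ∧ ⟪w, H (q t) w⟫ ≤ C * ‖w‖ ^ 2)
    (hX : ∀ t ∈ Icc a b, DifferentiableAt ℝ X (q t))
    (hq : ∀ t ∈ Icc a b, HasDerivWithinAt q (v t) (Icc a b) t)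
    (hv : ∀ t ∈ Icc a b, HasDerivWithinAt v
      (fderiv ℝ X (q t) (v t) - ε⁻¹ • H (q t) (v t - X (q t))) (Icc a b) t) :
    ∀ t ∈ Icc a b,
      Real.exp (-(2 * C / ε) * (t - a)) * ‖v a - X (q a)‖ ^ 2 ≤ ‖v t - X (q t)‖ ^ 2 ∧
      ‖v t - X (q t)‖ ^ 2 ≤ Real.exp (-(2 * c / ε) * (t - a)) * ‖v a - X (q a)‖ ^ 2 := by
  intro t ht
  set y : ℝ → E := fun s => v s - X (q s)
  have hy : ∀ s ∈ Icc a b, HasDerivWithinAt y (-(ε⁻¹ • H (q s) (y s))) (Icc a b) s := fun s hs =>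
    hasDerivWithinAt_sub_comp_of_feedforward (hX s hs).hasFDerivAt (hq s hs) (hv s hs)
  have hy_cont : ContinuousOn y (Icc a b) := fun s hs => (hy s hs).continuousWithinAt
  have hy_right : ∀ s ∈ Ico a b, HasDerivWithinAt y (-(ε⁻¹ • H (q s) (y s))) (Ici s) s :=
    fun s hs => (hy s (Ico_subset_Icc_self hs)).mono_of_mem_nhdsWithin (Icc_mem_nhdsGE_of_mem hs)
  have hinner (s : ℝ) : ⟪y s, -(ε⁻¹ • H (q s) (y s))⟫ = -(⟪y s, H (q s) (y s)⟫ / ε) := by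
    rw [inner_neg_right, real_inner_smul_right, inv_mul_eq_div]
  have hrate (k : ℝ) : -(2 * k / ε) = 2 * -(k / ε) := by ring
  rw [hrate, hrate]
  constructor
  · refine exp_mul_le_norm_sq_of_le_inner_deriv_right hy_cont hy_right (fun s hs => ?_) t ht
    rw [hinner, neg_mul, div_mul_eq_mul_div]
    gcongr
    exact (hH s (Ico_subset_Icc_self hs) (y s)).2
  · refine norm_sq_le_exp_mul_of_inner_deriv_right_le hy_cont hy_right (fun s hs => ?_) t ht
    rw [hinner, neg_mul, div_mul_eq_mul_div]
    gcongr
    exact (hH s (Ico_subset_Icc_self hs) (y s)).1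

/-- Two-sided exponential estimate for the velocity error of the closed-loop
Koditschek system with metric-comparison operator `H` satisfying
`c‖v‖² ≤ ⟪v, H x v⟫ ≤ C‖v‖²`: for `y(t) = q'(t) − X(q(t))` and all `t ≥ 0`,
`exp(−(2C/ε)t)‖y 0‖² ≤ ‖y t‖² ≤ exp(−(2c/ε)t)‖y 0‖²`. -/
theorem stmt9
    {E : Type*} [NormedAddCommGroup E] [InnerProductSpace ℝ E] [FiniteDimensional ℝ E]
    (H : E → (E →L[ℝ] E)) (ε : ℝ) (hε : 0 < ε) (c C : ℝ) (hc : 0 < c) (hcC : c ≤ C)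
    (hH : ∀ x v : E, c * ‖v‖ ^ 2 ≤ ⟪v, H x v⟫ ∧ ⟪v, H x v⟫ ≤ C * ‖v‖ ^ 2)
    (X : E → E) (hX : Differentiable ℝ X)
    (q : ℝ → E) (hq : Differentiable ℝ q) (hq' : Differentiable ℝ (deriv q))
    (heq : ∀ t : ℝ, deriv (deriv q) t =
      (fderiv ℝ X (q t)) (deriv q t) - ε⁻¹ • (H (q t)) (deriv q t - X (q t))) :
    ∀ t : ℝ, 0 ≤ t →
      Real.exp (-(2 * C / ε) * t) * ‖deriv q 0 - X (q 0)‖ ^ 2 ≤ ‖deriv q t - X (q t)‖ ^ 2 ∧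
      ‖deriv q t - X (q t)‖ ^ 2 ≤ Real.exp (-(2 * c / ε) * t) * ‖deriv q 0 - X (q 0)‖ ^ 2 := by
  intro t ht
  simpa only [sub_zero] using stmt9_general (H := fun x => H x) hε (fun s _ => hH (q s))
    (fun s _ => hX (q s)) (fun s _ => (hq s).hasDerivAt.hasDerivWithinAt)
    (fun s _ => heq s ▸ (hq' s).hasDerivAt.hasDerivWithinAt) t (right_mem_Icc.2 ht)
end
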